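/- Every still Life S ⊆ ℤ² has upper density at most 1/2. -/

import Mathlib

open Filter

/-- `y` is a neighbor of `x` in the 8-point (Moore) neighborhood of `ℤ²`. -/
def IsNbr (x y : ℤ × ℤ) : Prop :=
  y ≠ x ∧ |y.1 - x.1| ≤ 1 ∧ |y.2 - x.2| ≤ 1

/-- `N_S(x)`: the number of neighbors of `x` lying in `S`. -/
noncomputable def nbrCount (S : Set (ℤ × ℤ)) (x : ℤ × ℤ) : ℕ :=
  Set.ncard {y ∈ S | IsNbr x y}

/-- The box `B_r = {x : |x₁| < r, |x₂| < r}`. -/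
def box (r : ℕ) : Set (ℤ × ℤ) :=
  {x | |x.1| < (r : ℤ) ∧ |x.2| < (r : ℤ)}

/-- The upper density of `S ⊆ ℤ²`: `limsup_{r → ∞} |S ∩ B_r| / (2r-1)²`. -/
noncomputable def upperDensity (S : Set (ℤ × ℤ)) : ℝ :=
  limsup (fun r : ℕ => (Set.ncard (S ∩ box r) : ℝ) / (2 * (r : ℝ) - 1) ^ 2) atTop

/-- A still Life: a fixed point of the Game of Life transition rule. -/
def StillLife (S : Set (ℤ × ℤ)) : Prop :=
  (∀ x ∉ S, nbrCount S x ≠ 3) ∧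
  (∀ x ∈ S, 2 ≤ nbrCount S x) ∧
  (∀ x ∈ S, nbrCount S x ≤ 3)

open Finset hiding box

/-- The charge that a `2 × 2` block sends to the block meeting it in a single cell `v`: an empty
block sends one unit to each of its four diagonal neighbors, a block with one live cell sends one
unit each across that cell and across the opposite one, and a block with two diagonally placed live
cells sends one unit across `v` when `v` is the middle of an L-tromino filling the other block.
The cells `n₁`, `n₂`, `o` complete the sending block (`o` opposite to `v`), and the cells
`m₁`, `m₂`, `w` the receiving one (`w` opposite to `v`). -/
def transfer (v n₁ n₂ o m₁ m₂ w : Bool) : Bool :=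
  !n₁ && !n₂ && (!(v && o) || (m₁ && m₂ && !w))

/-- The discharging inequality for a `2 × 2` block inside its `4 × 4` window: the excess of live
cells over two, counted twice, plus the charge sent is at most the charge received. -/
theorem window_le : ∀ c00 c10 c01 c11 a00 a10 a20 a01 a02 : Bool,
    (c00 = true → a00.toNat + a10.toNat + a20.toNat + a01.toNat + a02.toNat
      + c10.toNat + c01.toNat + c11.toNat ≤ 3) →
    ∀ a30 a31 a32 : Bool,
    (c10 = true → a10.toNat + a20.toNat + a30.toNat + a31.toNat + a32.toNat
      + c00.toNat + c01.toNat + c11.toNat ≤ 3) →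
    ∀ a33 a23 a13 : Bool,
    (c11 = true → a31.toNat + a32.toNat + a33.toNat + a23.toNat + a13.toNat
      + c00.toNat + c10.toNat + c01.toNat ≤ 3) →
    ∀ a03 : Bool,
    (c01 = true → a01.toNat + a02.toNat + a03.toNat + a13.toNat + a23.toNat
      + c00.toNat + c10.toNat + c11.toNat ≤ 3) →
    2 * (c00.toNat + c10.toNat + c01.toNat + c11.toNat)
      + ((transfer c00 c10 c01 c11 a01 a10 a00).toNat
        + (transfer c10 c00 c11 c01 a31 a20 a30).toNat
        + (transfer c01 c11 c00 c10 a02 a13 a03).toNat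
        + (transfer c11 c01 c10 c00 a32 a23 a33).toNat)
      ≤ 4 + ((transfer c00 a01 a10 a00 c10 c01 c11).toNat
        + (transfer c10 a31 a20 a30 c00 c11 c01).toNat
        + (transfer c01 a02 a13 a03 c11 c00 c10).toNat
        + (transfer c11 a32 a23 a33 c01 c10 c00).toNat) := by
  decide +kernel

/-- Sum of a Boolean array over the `n × n` square with lower left corner `(a, a)`. -/
def squareSum (f : ℤ → ℤ → Bool) (a : ℤ) (n : ℕ) : ℤ :=
  ∑ k ∈ range n, ∑ l ∈ range n, ((f (a + k) (a + l)).toNat : ℤ)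

theorem toNat_cast_mem (b : Bool) : 0 ≤ (b.toNat : ℤ) ∧ (b.toNat : ℤ) ≤ 1 := by
  cases b <;> simp

theorem abs_squareSum_shift_fst (f : ℤ → ℤ → Bool) (a : ℤ) (n : ℕ) :
    |squareSum (fun x y => f (x + 1) y) a n - squareSum f a n| ≤ n := by
  have key : squareSum (fun x y => f (x + 1) y) a n - squareSum f a n
      = ∑ l ∈ range n, (((f (a + n) (a + l)).toNat : ℤ) - (f a (a + l)).toNat) := by
    unfold squareSum
    rw [← sum_sub_distrib, sum_sub_distrib]
    have := sum_range_sub (fun k : ℕ => ∑ l ∈ range n, ((f (a + k) (a + l)).toNat : ℤ)) n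
    simpa [add_assoc, sum_sub_distrib] using this
  rw [key]
  refine (abs_sum_le_sum_abs _ _).trans ((sum_le_card_nsmul _ _ 1 fun l _ => ?_).trans (by simp))
  have h₁ := toNat_cast_mem (f (a + n) (a + l))
  have h₂ := toNat_cast_mem (f a (a + l))
  exact abs_le.2 ⟨by linarith, by linarith⟩

theorem abs_squareSum_shift_snd (f : ℤ → ℤ → Bool) (a : ℤ) (n : ℕ) :
    |squareSum (fun x y => f x (y + 1)) a n - squareSum f a n| ≤ n := by
  have h := abs_squareSum_shift_fst (fun x y => f y x) a n
  unfold squareSum at h ⊢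
  rwa [sum_comm, sum_comm (s := range n) (t := range n)
    (f := fun k l : ℕ => ((f (a + l) (a + k)).toNat : ℤ))] at h

theorem abs_squareSum_shift_both (f : ℤ → ℤ → Bool) (a : ℤ) (n : ℕ) :
    |squareSum (fun x y => f (x + 1) (y + 1)) a n - squareSum f a n| ≤ 2 * n := by
  have h₁ := abs_squareSum_shift_fst (fun x y => f x (y + 1)) a n
  have h₂ := abs_squareSum_shift_snd f a n
  rw [abs_le] at *
  constructor <;> linarith

/-- At most three of the eight neighbors of every live cell are live. -/
def AtMostThree (c : ℤ → ℤ → Bool) : Prop :=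
  ∀ x y, c x y = true →
    (c (x - 1) (y - 1)).toNat + (c x (y - 1)).toNat + (c (x + 1) (y - 1)).toNat
      + (c (x - 1) y).toNat + (c (x + 1) y).toNat
      + (c (x - 1) (y + 1)).toNat + (c x (y + 1)).toNat + (c (x + 1) (y + 1)).toNat ≤ 3

/-- The charge sent, in direction `(s, t)`, between the two `2 × 2` blocks that meet in the
cell `(x, y)` only. -/
def flow (c : ℤ → ℤ → Bool) (s t x y : ℤ) : Bool :=
  transfer (c x y) (c (x - s) y) (c x (y - t)) (c (x - s) (y - t))
    (c (x + s) y) (c x (y + t)) (c (x + s) (y + t))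

theorem block_le {c : ℤ → ℤ → Bool} (h : AtMostThree c) (x y : ℤ) :
    2 * ((c x y).toNat + (c (x + 1) y).toNat + (c x (y + 1)).toNat + (c (x + 1) (y + 1)).toNat)
      + ((flow c (-1) (-1) x y).toNat + (flow c 1 (-1) (x + 1) y).toNat
        + (flow c (-1) 1 x (y + 1)).toNat + (flow c 1 1 (x + 1) (y + 1)).toNat)
      ≤ 4 + ((flow c 1 1 x y).toNat + (flow c (-1) 1 (x + 1) y).toNat
        + (flow c 1 (-1) x (y + 1)).toNat + (flow c (-1) (-1) (x + 1) (y + 1)).toNat) := by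
  have e : ∀ z : ℤ, z + 1 - 1 = z := fun z => by ring
  have e₁ : ∀ z : ℤ, z + 1 + -1 = z := fun z => by ring
  have h00 := h x y
  have h10 := h (x + 1) y
  have h01 := h x (y + 1)
  have h11 := h (x + 1) (y + 1)
  simp only [e] at h00 h10 h01 h11
  have := window_le (c x y) (c (x + 1) y) (c x (y + 1)) (c (x + 1) (y + 1))
    (c (x - 1) (y - 1)) (c x (y - 1)) (c (x + 1) (y - 1)) (c (x - 1) y) (c (x - 1) (y + 1))
    (fun hc => by have := h00 hc; omega)
    (c (x + 1 + 1) (y - 1)) (c (x + 1 + 1) y) (c (x + 1 + 1) (y + 1))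
    (fun hc => by have := h10 hc; omega)
    (c (x + 1 + 1) (y + 1 + 1)) (c (x + 1) (y + 1 + 1)) (c x (y + 1 + 1))
    (fun hc => by have := h11 hc; omega)
    (c (x - 1) (y + 1 + 1))
    (fun hc => by have := h01 hc; omega)
  simpa only [flow, sub_neg_eq_add, e, e₁, ← sub_eq_add_neg] using this

theorem squareSum_le {c : ℤ → ℤ → Bool} (h : AtMostThree c) (a : ℤ) (n : ℕ) :
    8 * squareSum c a n ≤ 4 * (n : ℤ) ^ 2 + 16 * n := by
  have key : 2 * (squareSum c a n + squareSum (fun x y => c (x + 1) y) a n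
        + squareSum (fun x y => c x (y + 1)) a n + squareSum (fun x y => c (x + 1) (y + 1)) a n)
      + (squareSum (flow c (-1) (-1)) a n + squareSum (fun x y => flow c 1 (-1) (x + 1) y) a n
        + squareSum (fun x y => flow c (-1) 1 x (y + 1)) a n
        + squareSum (fun x y => flow c 1 1 (x + 1) (y + 1)) a n)
      ≤ 4 * (n : ℤ) ^ 2 + (squareSum (flow c 1 1) a n
        + squareSum (fun x y => flow c (-1) 1 (x + 1) y) a n
        + squareSum (fun x y => flow c 1 (-1) x (y + 1)) a n
        + squareSum (fun x y => flow c (-1) (-1) (x + 1) (y + 1)) a n) := by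
    have h4 : 4 * (n : ℤ) ^ 2 = ∑ k ∈ range n, ∑ l ∈ range n, (4 : ℤ) := by
      simp; ring
    rw [h4]
    simp only [squareSum, ← sum_add_distrib, mul_sum]
    exact sum_le_sum fun k _ => sum_le_sum fun l _ => by exact_mod_cast block_le h (a + k) (a + l)
  have c₁ := abs_le.1 (abs_squareSum_shift_fst c a n)
  have c₂ := abs_le.1 (abs_squareSum_shift_snd c a n)
  have c₃ := abs_le.1 (abs_squareSum_shift_both c a n)
  have f₁ := abs_le.1 (abs_squareSum_shift_both (flow c (-1) (-1)) a n)
  have f₂ := abs_le.1 (abs_squareSum_shift_both (flow c 1 1) a n)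
  have f₃ := abs_le.1 (abs_squareSum_shift_fst (flow c 1 (-1)) a n)
  have f₄ := abs_le.1 (abs_squareSum_shift_snd (flow c 1 (-1)) a n)
  have f₅ := abs_le.1 (abs_squareSum_shift_fst (flow c (-1) 1) a n)
  have f₆ := abs_le.1 (abs_squareSum_shift_snd (flow c (-1) 1) a n)
  linarith

theorem setOf_isNbr_eq (S : Set (ℤ × ℤ)) [DecidablePred (· ∈ S)] (x y : ℤ) :
    {z ∈ S | IsNbr (x, y) z} =
      (({(x - 1, y - 1), (x, y - 1), (x + 1, y - 1), (x - 1, y), (x + 1, y),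
        (x - 1, y + 1), (x, y + 1), (x + 1, y + 1)} : Finset (ℤ × ℤ)).filter (· ∈ S)
        : Set (ℤ × ℤ)) := by
  ext ⟨u, v⟩
  simp only [Set.mem_ofPred_eq, IsNbr, ne_eq, Prod.mk.injEq, coe_filter, mem_insert, mem_singleton,
    abs_le, and_comm (a := (u, v) ∈ S)]
  refine and_congr_left fun _ => ?_
  omega

theorem nbrCount_eq (S : Set (ℤ × ℤ)) [DecidablePred (· ∈ S)] (x y : ℤ) :
    nbrCount S (x, y) =
      (decide ((x - 1, y - 1) ∈ S)).toNat + (decide ((x, y - 1) ∈ S)).toNat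
      + (decide ((x + 1, y - 1) ∈ S)).toNat + (decide ((x - 1, y) ∈ S)).toNat
      + (decide ((x + 1, y) ∈ S)).toNat + (decide ((x - 1, y + 1) ∈ S)).toNat
      + (decide ((x, y + 1) ∈ S)).toNat + (decide ((x + 1, y + 1) ∈ S)).toNat := by
  have d : ∀ p : Prop, ∀ [Decidable p], (decide p).toNat = if p then 1 else 0 := by
    intro p _; by_cases hp : p <;> simp [hp]
  simp only [d]
  rw [nbrCount, setOf_isNbr_eq, Set.ncard_coe_finset, card_filter]
  repeat rw [sum_insert (by
    simp only [mem_insert, mem_singleton, Prod.mk.injEq]; omega)]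
  rw [sum_singleton]
  ring

theorem ncard_inter_box (S : Set (ℤ × ℤ)) [DecidablePred (· ∈ S)] (r : ℕ) :
    (Set.ncard (S ∩ box r) : ℤ) =
      squareSum (fun x y => decide ((x, y) ∈ S)) (1 - r) (2 * r - 1) := by
  let e : ℕ × ℕ → ℤ × ℤ := fun p => (1 - r + p.1, 1 - r + p.2)
  have he : Function.Injective e := by
    rintro ⟨k, l⟩ ⟨k', l'⟩ hkl
    simpa [e] using hkl
  have hS : S ∩ box r =
      e '' ((range (2 * r - 1) ×ˢ range (2 * r - 1)).filter (e · ∈ S) : Finset (ℕ × ℕ)) := by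
    ext ⟨x, y⟩
    simp only [Set.mem_inter_iff, box, Set.mem_ofPred_eq, abs_lt, Set.mem_image, mem_coe,
      mem_filter, mem_product, mem_range]
    constructor
    · rintro ⟨hxy, hx, hy⟩
      have hp : e ((x + r - 1).toNat, (y + r - 1).toNat) = (x, y) := by
        simp only [e, Prod.mk.injEq]; omega
      exact ⟨_, ⟨by omega, hp ▸ hxy⟩, hp⟩
    · rintro ⟨⟨k, l⟩, ⟨hkl, hmem⟩, hp⟩
      rw [hp] at hmem
      simp only [e, Prod.mk.injEq] at hp
      exact ⟨hmem, by omega, by omega⟩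
  rw [hS, Set.ncard_image_of_injective _ he, Set.ncard_coe_finset, card_filter, sum_product,
    squareSum]
  push_cast
  refine sum_congr rfl fun k _ => sum_congr rfl fun l _ => ?_
  by_cases hp : e (k, l) ∈ S <;> simp [hp, e]

theorem ncard_inter_box_div_le {S : Set (ℤ × ℤ)} (h : ∀ x ∈ S, nbrCount S x ≤ 3)
    {r : ℕ} (hr : 1 ≤ r) :
    (Set.ncard (S ∩ box r) : ℝ) / (2 * (r : ℝ) - 1) ^ 2 ≤ 1 / 2 + 2 / (2 * (r : ℝ) - 1) := by
  classical
  have hc : AtMostThree fun x y => decide ((x, y) ∈ S) := fun x y hxy => by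
    have := h (x, y) (of_decide_eq_true hxy)
    rwa [nbrCount_eq] at this
  have hle := squareSum_le hc (1 - r) (2 * r - 1)
  rw [← ncard_inter_box] at hle
  have hle' : 8 * (Set.ncard (S ∩ box r) : ℝ)
      ≤ 4 * ((2 * r - 1 : ℕ) : ℝ) ^ 2 + 16 * ((2 * r - 1 : ℕ) : ℝ) := by exact_mod_cast hle
  rw [Nat.cast_sub (by omega)] at hle'
  push_cast at hle'
  have hr' : (1 : ℝ) ≤ r := by exact_mod_cast hr
  have hpos : 0 < 2 * (r : ℝ) - 1 := by linarith
  rw [div_le_iff₀ (by positivity)]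
  have : (1 / 2 + 2 / (2 * (r : ℝ) - 1)) * (2 * (r : ℝ) - 1) ^ 2
      = (2 * (r : ℝ) - 1) ^ 2 / 2 + 2 * (2 * (r : ℝ) - 1) := by
    field_simp
  rw [this]
  linarith

theorem stillLife_density_le_half (S : Set (ℤ × ℤ)) (h : StillLife S) :
    upperDensity S ≤ 1 / 2 := by
  have hlim : Tendsto (fun r : ℕ => 1 / 2 + 2 / (2 * (r : ℝ) - 1)) atTop (nhds (1 / 2)) := by
    have hden : Tendsto (fun r : ℕ => 2 * (r : ℝ) - 1) atTop atTop :=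
      tendsto_atTop_add_const_right _ _
        (tendsto_natCast_atTop_atTop.const_mul_atTop (by norm_num))
    simpa only [add_zero] using (hden.const_div_atTop 2).const_add (1 / 2)
  rw [upperDensity, ← hlim.limsup_eq]
  refine limsup_le_limsup ?_ ?_ hlim.isBoundedUnder_le
  · filter_upwards [eventually_ge_atTop 1] with r hr using ncard_inter_box_div_le h.2.2 hr
  · exact isCoboundedUnder_le_of_le _ (x := 0) fun r => by positivity
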